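/- The volume (6-dimensional Lebesgue measure) of the polytope E_{123} ⊂ ℝ⁶ defined by the Q-inequalities for each of A, B, C together with A ≻_1 B, B ≻_2 C, C ≻_3 A equals 23/(1800·512) = 23/921600. -/

import Mathlib

open MeasureTheory

/-- The polytope `E₁₂₃ ⊂ ℝ⁶` with coordinates `(a1,a2,b1,b2,c1,c2)`:
the `Q`-inequalities for each of `A`, `B`, `C` together with
`A ≻₁ B`, `B ≻₂ C`, `C ≻₃ A`. -/
def E123 : Set (Fin 6 → ℝ) :=
  {x |
    -- Q-inequalities for A = (x 0, x 1)
    (0 ≤ x 0 ∧ x 0 ≤ x 1 ∧ 1 ≤ 2 * x 0 + 2 * x 1 ∧ 2 * x 0 + 4 * x 1 ≤ 3) ∧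
    -- Q-inequalities for B = (x 2, x 3)
    (0 ≤ x 2 ∧ x 2 ≤ x 3 ∧ 1 ≤ 2 * x 2 + 2 * x 3 ∧ 2 * x 2 + 4 * x 3 ≤ 3) ∧
    -- Q-inequalities for C = (x 4, x 5)
    (0 ≤ x 4 ∧ x 4 ≤ x 5 ∧ 1 ≤ 2 * x 4 + 2 * x 5 ∧ 2 * x 4 + 4 * x 5 ≤ 3) ∧
    -- A ≻₁ B
    (x 0 ≤ x 2 ∧ x 3 ≤ x 1 ∧ x 0 + x 1 ≤ x 2 + x 3) ∧
    -- B ≻₂ C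
    (x 4 ≤ x 2 ∧ x 3 ≤ x 5 ∧ x 2 + x 3 ≤ x 4 + x 5) ∧
    -- C ≻₃ A
    (x 0 ≤ x 4 ∧ x 1 ≤ x 5 ∧ x 0 + x 1 ≤ x 4 + x 5)}

/-!
Dropping redundant inequalities, `E123` is the chain `0 ≤ a₁ ≤ c₁ ≤ b₁ ≤ b₂ ≤ a₂ ≤ c₂` together with
`a₁ + a₂ ≤ b₁ + b₂ ≤ c₁ + c₂`, `2c₁ + 4c₂ ≤ 3` and `1 ≤ 2a₁ + 2a₂`. The hyperplane
`a₂ + c₁ = b₁ + b₂` splits it into two pieces. Without the last inequality each piece is a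
simplex, one of whose vertices lies on the hyperplane `2a₁ + 2a₂ = 1`. So, up to an affine change of
coordinates, each piece is the corner simplex `y ≥ 0, ∑ yᵢ ≤ 1` cut by a half-space
`∑_{j ∈ N} wⱼ yⱼ ≤ ∑_{i ∈ P} wᵢ yᵢ` with positive weights.

The fraction of the simplex that survives such a cut is computed recursively. Choose `i ∈ P` and
`j ∈ N`. On the part where `wⱼ yⱼ ≤ wᵢ yᵢ`, moving the mass `(wⱼ / wᵢ) yⱼ` from coordinate `i` to
coordinate `j` keeps the total mass and identifies the part with the cut in which `j` is removed
from `N`; the determinant of this map is `(wᵢ + wⱼ) / wᵢ`. The other part is symmetric.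
-/

section HalfSpace

variable {E : Type*} [NormedAddCommGroup E] [NormedSpace ℝ E] [FiniteDimensional ℝ E]
  [MeasurableSpace E] [BorelSpace E] (μ : Measure E) [μ.IsAddHaarMeasure]

theorem addHaar_setOf_linearMap_eq {f g : E →ₗ[ℝ] ℝ} (hfg : f ≠ g) : μ {x | f x = g x} = 0 :=
  μ.addHaar_submodule (LinearMap.eqLocus f g) fun h => hfg (LinearMap.eqLocus_eq_top.mp h)

theorem addHaar_eq_add_inter_linearMap_le {f g : E →ₗ[ℝ] ℝ} (hfg : f ≠ g) (s : Set E) :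
    μ s = μ (s ∩ {x | f x ≤ g x}) + μ (s ∩ {x | g x ≤ f x}) := by
  have hmeas : MeasurableSet {x | f x ≤ g x} :=
    measurableSet_le f.continuous_of_finiteDimensional.measurable
      g.continuous_of_finiteDimensional.measurable
  have hne : ∀ᵐ x ∂μ, f x ≠ g x := by
    simpa [ae_iff] using addHaar_setOf_linearMap_eq μ hfg
  rw [← measure_inter_add_sdiff s hmeas]
  congr 1
  refine measure_congr ?_
  filter_upwards [hne] with x hx
  refine propext (and_congr_right fun _ => ?_)
  exact not_le.trans ⟨le_of_lt, fun h => lt_of_le_of_ne h hx.symm⟩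

end HalfSpace

theorem volume_preimage_mulVec_add {ι : Type*} [Fintype ι] [DecidableEq ι] {M : Matrix ι ι ℝ}
    (hM : M.det ≠ 0) (b : ι → ℝ) (s : Set (ι → ℝ)) :
    volume ((fun x => M.mulVec x + b) ⁻¹' s) = ENNReal.ofReal |M.det⁻¹| * volume s := by
  have hcomp : (fun x => M.mulVec x + b) ⁻¹' s = Matrix.toLin' M ⁻¹' ((· + b) ⁻¹' s) := rfl
  rw [hcomp, Measure.addHaar_preimage_linearMap _ (by rwa [LinearMap.det_toLin']),
    LinearMap.det_toLin', measure_preimage_add_right]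

/-- The simplex with vertices `0` and `t eᵢ`, which is empty for `t < 0`. -/
def cornerSimplex (ι : Type*) [Fintype ι] (t : ℝ) : Set (ι → ℝ) :=
  {y | (∀ i, 0 ≤ y i) ∧ ∑ i, y i ≤ t}

theorem isClosed_cornerSimplex (ι : Type*) [Fintype ι] (t : ℝ) :
    IsClosed (cornerSimplex ι t) := by
  have hnonneg : IsClosed {y : ι → ℝ | ∀ i, 0 ≤ y i} := isClosed_Ici
  have hsum : IsClosed {y : ι → ℝ | ∑ i, y i ≤ t} := isClosed_le (by fun_prop) (by fun_prop)
  exact hnonneg.inter hsum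

theorem cons_mem_cornerSimplex_iff {n : ℕ} {t x : ℝ} {y : Fin n → ℝ} :
    (Fin.cons x y : Fin (n + 1) → ℝ) ∈ cornerSimplex (Fin (n + 1)) t ↔
      0 ≤ x ∧ y ∈ cornerSimplex (Fin n) (t - x) := by
  simp [cornerSimplex, Fin.forall_fin_succ, Fin.sum_univ_succ, le_sub_iff_add_le', and_assoc]

theorem cornerSimplex_eq_empty {ι : Type*} [Fintype ι] {t : ℝ} (ht : t < 0) :
    cornerSimplex ι t = ∅ :=
  Set.eq_empty_of_forall_notMem fun _ ⟨hy, hsum⟩ =>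
    (ht.trans_le (Finset.sum_nonneg fun i _ => hy i)).not_ge hsum

theorem volume_cornerSimplex_fin_succ (n : ℕ) (t : ℝ) :
    volume (cornerSimplex (Fin (n + 1)) t) =
      ∫⁻ x in Set.Icc 0 t, volume (cornerSimplex (Fin n) (t - x)) := by
  have hmeas : MeasurableSet (cornerSimplex (Fin (n + 1)) t) :=
    (isClosed_cornerSimplex _ t).measurableSet
  have hpres := (volume_preserving_piFinSuccAbove (fun _ : Fin (n + 1) => ℝ) 0).symm
  rw [← hpres.measure_preimage hmeas.nullMeasurableSet, Measure.volume_eq_prod,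
    Measure.prod_apply (hpres.measurable hmeas), ← lintegral_indicator measurableSet_Icc]
  refine lintegral_congr fun x => ?_
  have hslice : Prod.mk x ⁻¹' ((MeasurableEquiv.piFinSuccAbove (fun _ => ℝ) 0).symm ⁻¹'
      cornerSimplex (Fin (n + 1)) t) = {y | 0 ≤ x ∧ y ∈ cornerSimplex (Fin n) (t - x)} := by
    ext y
    rw [Set.mem_preimage, Set.mem_preimage, Set.mem_ofPred_eq, ← cons_mem_cornerSimplex_iff]
    simp [MeasurableEquiv.piFinSuccAbove, Fin.consEquiv]
  rw [hslice]
  by_cases hx : x ∈ Set.Icc 0 t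
  · simp [Set.indicator_of_mem hx, hx.1]
  · rw [Set.indicator_of_notMem hx]
    rcases lt_or_ge x 0 with hneg | hnonneg
    · simp [hneg.not_ge]
    · have htx : t - x < 0 := sub_neg.mpr (lt_of_not_ge fun h => hx ⟨hnonneg, h⟩)
      simp [cornerSimplex_eq_empty htx]

theorem volume_cornerSimplex_fin (n : ℕ) {t : ℝ} (ht : 0 ≤ t) :
    volume (cornerSimplex (Fin n) t) = ENNReal.ofReal (t ^ n / n.factorial) := by
  induction n generalizing t with
  | zero => simp [cornerSimplex, ht, volume_pi]
  | succ n ih =>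
    have hnonneg : ∀ x ∈ Set.Icc 0 t, 0 ≤ (t - x) ^ n / n.factorial := fun x hx =>
      div_nonneg (pow_nonneg (sub_nonneg.mpr hx.2) n) n.factorial.cast_nonneg
    have hint : IntegrableOn (fun x : ℝ => (t - x) ^ n / n.factorial) (Set.Icc 0 t) :=
      Continuous.integrableOn_Icc (by fun_prop)
    calc volume (cornerSimplex (Fin (n + 1)) t)
      _ = ∫⁻ x in Set.Icc 0 t, volume (cornerSimplex (Fin n) (t - x)) :=
        volume_cornerSimplex_fin_succ n t
      _ = ∫⁻ x in Set.Icc 0 t, ENNReal.ofReal ((t - x) ^ n / n.factorial) :=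
        setLIntegral_congr_fun measurableSet_Icc fun x hx => ih (sub_nonneg.mpr hx.2)
      _ = ENNReal.ofReal (∫ x in Set.Icc 0 t, (t - x) ^ n / n.factorial) :=
        (ofReal_integral_eq_lintegral_ofReal hint
          ((ae_restrict_mem measurableSet_Icc).mono hnonneg)).symm
      _ = ENNReal.ofReal (∫ x in (0 : ℝ)..t, (t - x) ^ n / n.factorial) := by
        rw [integral_Icc_eq_integral_Ioc, intervalIntegral.integral_of_le ht]
      _ = ENNReal.ofReal (t ^ (n + 1) / (n + 1).factorial) := by
        rw [intervalIntegral.integral_comp_sub_left (fun x => x ^ n / (n.factorial : ℝ)) t,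
          intervalIntegral.integral_div, integral_pow, Nat.factorial_succ]
        push_cast
        field_simp
        simp

section MassTransfer

variable {ι : Type*} [DecidableEq ι]

/-- The linear map moving the mass `(w j / w i) * y j` from coordinate `i` to coordinate `j`; the
weighted coordinate `w i * y i` thereby drops by `w j * y j`. -/
noncomputable def massTransfer (w : ι → ℝ) (i j : ι) : (ι → ℝ) →ₗ[ℝ] (ι → ℝ) :=
  LinearMap.transvection ((w j / w i) • LinearMap.proj j) (Pi.single j 1 - Pi.single i 1)

variable {w : ι → ℝ} {i j : ι}

theorem mul_massTransfer_source (hij : i ≠ j) (hi : w i ≠ 0) (y : ι → ℝ) :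
    w i * massTransfer w i j y i = w i * y i - w j * y j := by
  have hvalue : massTransfer w i j y i = y i - w j / w i * y j := by
    simp [massTransfer, LinearMap.transvection.apply, hij, sub_eq_add_neg]
  rw [hvalue]
  field_simp

theorem massTransfer_target (hij : i ≠ j) (y : ι → ℝ) :
    massTransfer w i j y j = (1 + w j / w i) * y j := by
  simp [massTransfer, LinearMap.transvection.apply, hij.symm, add_mul]

theorem massTransfer_of_ne {k : ι} (hki : k ≠ i) (hkj : k ≠ j) (y : ι → ℝ) :
    massTransfer w i j y k = y k := by
  simp [massTransfer, LinearMap.transvection.apply, hki, hkj]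

theorem sum_mul_massTransfer_of_notMem {s : Finset ι} (hi : i ∉ s) (hj : j ∉ s) (y : ι → ℝ) :
    ∑ k ∈ s, w k * massTransfer w i j y k = ∑ k ∈ s, w k * y k :=
  Finset.sum_congr rfl fun _ hk => by
    rw [massTransfer_of_ne (ne_of_mem_of_not_mem hk hi) (ne_of_mem_of_not_mem hk hj)]

theorem massTransfer_nonneg_iff (hij : i ≠ j) (hi : 0 < w i) (hj : 0 ≤ w j) {y : ι → ℝ} :
    (∀ k, 0 ≤ massTransfer w i j y k) ↔ (∀ k, 0 ≤ y k) ∧ w j * y j ≤ w i * y i := by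
  have hsource : 0 ≤ massTransfer w i j y i ↔ w j * y j ≤ w i * y i := by
    rw [← mul_nonneg_iff_of_pos_left hi, mul_massTransfer_source hij hi.ne', sub_nonneg]
  have htarget : 0 ≤ massTransfer w i j y j ↔ 0 ≤ y j := by
    rw [massTransfer_target hij, mul_nonneg_iff_of_pos_left (by positivity)]
  constructor
  · intro h
    have hyj : 0 ≤ y j := htarget.mp (h j)
    have hmass : w j * y j ≤ w i * y i := hsource.mp (h i)
    refine ⟨fun k => ?_, hmass⟩
    rcases eq_or_ne k i with rfl | hki
    · exact nonneg_of_mul_nonneg_right ((mul_nonneg hj hyj).trans hmass) hi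
    rcases eq_or_ne k j with rfl | hkj
    · exact hyj
    · exact massTransfer_of_ne hki hkj y ▸ h k
  · rintro ⟨h, hmass⟩ k
    rcases eq_or_ne k i with rfl | hki
    · exact hsource.mpr hmass
    rcases eq_or_ne k j with rfl | hkj
    · exact htarget.mpr (h k)
    · exact (massTransfer_of_ne hki hkj y).symm ▸ h k

variable [Fintype ι]

theorem sum_massTransfer (w y : ι → ℝ) (i j : ι) : ∑ k, massTransfer w i j y k = ∑ k, y k := by
  simp [massTransfer, LinearMap.transvection.apply, Finset.sum_add_distrib, ← Finset.mul_sum]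

theorem massTransfer_mem_cornerSimplex_iff (hij : i ≠ j) (hi : 0 < w i) (hj : 0 ≤ w j) {t : ℝ}
    {y : ι → ℝ} :
    massTransfer w i j y ∈ cornerSimplex ι t ↔ y ∈ cornerSimplex ι t ∧ w j * y j ≤ w i * y i := by
  simp only [cornerSimplex, Set.mem_ofPred_eq, massTransfer_nonneg_iff hij hi hj,
    sum_massTransfer, and_right_comm]

theorem volume_preimage_massTransfer (hij : i ≠ j) (hi : 0 < w i) (hj : 0 ≤ w j)
    (s : Set (ι → ℝ)) :
    volume (massTransfer w i j ⁻¹' s) = ENNReal.ofReal (w i / (w i + w j)) * volume s := by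
  have hdet : LinearMap.det (massTransfer w i j) = (w i + w j) / w i := by
    rw [add_div, div_self hi.ne']
    simp [massTransfer, hij.symm]
  have hpos : 0 < (w i + w j) / w i := by positivity
  rw [Measure.addHaar_preimage_linearMap _ (hdet ▸ hpos.ne'), hdet, abs_of_pos (inv_pos.mpr hpos),
    inv_div]

end MassTransfer

section CutSimplex

variable {ι : Type*} [Fintype ι]

/-- The part of the corner simplex where the `w`-weighted mass on `N` is at most that on `P`. -/
def cutSimplex (t : ℝ) (w : ι → ℝ) (P N : Finset ι) : Set (ι → ℝ) :=
  cornerSimplex ι t ∩ {y | ∑ j ∈ N, w j * y j ≤ ∑ i ∈ P, w i * y i}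

variable {t : ℝ} {w : ι → ℝ} {P N : Finset ι} {i j : ι}

theorem cutSimplex_empty_right (hw : ∀ i, 0 ≤ w i) : cutSimplex t w P ∅ = cornerSimplex ι t := by
  refine Set.inter_eq_left.mpr fun y hy => ?_
  simpa using Finset.sum_nonneg fun i _ => mul_nonneg (hw i) (hy.1 i)

theorem volume_cutSimplex_empty_left (hw : ∀ i, 0 < w i) (hj : j ∈ N) :
    volume (cutSimplex t w ∅ N) = 0 := by
  refine measure_mono_null ?_ (Measure.pi_hyperplane (fun _ : ι => (volume : Measure ℝ)) j 0)
  rintro y ⟨⟨hy, -⟩, hle⟩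
  have hterm : ∀ k ∈ N, 0 ≤ w k * y k := fun k _ => mul_nonneg (hw k).le (hy k)
  have hzero : ∑ k ∈ N, w k * y k = 0 :=
    le_antisymm (by simpa using hle) (Finset.sum_nonneg hterm)
  have hjzero : w j * y j = 0 := (Finset.sum_eq_zero_iff_of_nonneg hterm).mp hzero j hj
  exact (mul_eq_zero.mp hjzero).resolve_left (hw j).ne'

variable [DecidableEq ι]

theorem cutSimplex_insert_insert_inter_le (hi : 0 < w i) (hj : 0 ≤ w j) (hij : i ≠ j)
    (hiP : i ∉ P) (hiN : i ∉ N) (hjP : j ∉ P) (hjN : j ∉ N) :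
    cutSimplex t w (insert i P) (insert j N) ∩ {y | w j * y j ≤ w i * y i} =
      massTransfer w i j ⁻¹' cutSimplex t w (insert i P) N := by
  ext y
  simp only [cutSimplex, Set.mem_inter_iff, Set.mem_preimage, Set.mem_ofPred_eq,
    massTransfer_mem_cornerSimplex_iff hij hi hj, Finset.sum_insert hiP, Finset.sum_insert hjN,
    mul_massTransfer_source hij hi.ne', sum_mul_massTransfer_of_notMem hiP hjP,
    sum_mul_massTransfer_of_notMem hiN hjN]
  grind

theorem cutSimplex_insert_insert_inter_ge (hi : 0 ≤ w i) (hj : 0 < w j) (hij : i ≠ j)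
    (hiP : i ∉ P) (hiN : i ∉ N) (hjP : j ∉ P) (hjN : j ∉ N) :
    cutSimplex t w (insert i P) (insert j N) ∩ {y | w i * y i ≤ w j * y j} =
      massTransfer w j i ⁻¹' cutSimplex t w P (insert j N) := by
  ext y
  simp only [cutSimplex, Set.mem_inter_iff, Set.mem_preimage, Set.mem_ofPred_eq,
    massTransfer_mem_cornerSimplex_iff hij.symm hj hi, Finset.sum_insert hiP,
    Finset.sum_insert hjN, mul_massTransfer_source hij.symm hj.ne',
    sum_mul_massTransfer_of_notMem hjP hiP, sum_mul_massTransfer_of_notMem hjN hiN]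
  grind

theorem volume_cutSimplex_insert_insert (hi : 0 < w i) (hj : 0 < w j) (hij : i ≠ j)
    (hiP : i ∉ P) (hiN : i ∉ N) (hjP : j ∉ P) (hjN : j ∉ N) :
    volume (cutSimplex t w (insert i P) (insert j N)) =
      ENNReal.ofReal (w i / (w i + w j)) * volume (cutSimplex t w (insert i P) N) +
        ENNReal.ofReal (w j / (w i + w j)) * volume (cutSimplex t w P (insert j N)) := by
  have hne : w j • LinearMap.proj j ≠ (w i • LinearMap.proj i : (ι → ℝ) →ₗ[ℝ] ℝ) := fun h => by
    simpa [hij.symm, hi.ne] using LinearMap.congr_fun h (Pi.single i 1)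
  calc volume (cutSimplex t w (insert i P) (insert j N))
    _ = volume (cutSimplex t w (insert i P) (insert j N) ∩ {y | w j * y j ≤ w i * y i}) +
          volume (cutSimplex t w (insert i P) (insert j N) ∩ {y | w i * y i ≤ w j * y j}) :=
      addHaar_eq_add_inter_linearMap_le volume hne _
    _ = _ := by
      rw [cutSimplex_insert_insert_inter_le hi hj.le hij hiP hiN hjP hjN,
        cutSimplex_insert_insert_inter_ge hi.le hj hij hiP hiN hjP hjN,
        volume_preimage_massTransfer hij hi hj.le,
        volume_preimage_massTransfer hij.symm hj hi.le, add_comm (w j)]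

/-- The fraction of a corner simplex that survives the cut `∑ bⱼ yⱼ ≤ ∑ aᵢ xᵢ`, where the `xᵢ` and
`yⱼ` are distinct coordinates and the positive weights `a`, `b` are given as lists. -/
noncomputable def cutFraction : List ℝ → List ℝ → ℝ
  | _, [] => 1
  | [], _ :: _ => 0
  | a :: p, b :: n => a / (a + b) * cutFraction (a :: p) n + b / (a + b) * cutFraction p (b :: n)
termination_by p n => p.length + n.length

theorem cutFraction_nonneg {p n : List ℝ} (hp : ∀ a ∈ p, 0 ≤ a) (hn : ∀ b ∈ n, 0 ≤ b) :
    0 ≤ cutFraction p n := by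
  fun_induction cutFraction p n with
  | case1 => exact zero_le_one
  | case2 => exact le_rfl
  | case3 a p b n ihn ihp =>
    obtain ⟨ha, hp'⟩ := List.forall_mem_cons.mp hp
    obtain ⟨hb, hn'⟩ := List.forall_mem_cons.mp hn
    have := ihn hp hn'
    have := ihp hp' hn
    positivity

theorem volume_cutSimplex_toFinset (hw : ∀ i, 0 < w i) {p n : List ι} (hpn : (p ++ n).Nodup) :
    volume (cutSimplex t w p.toFinset n.toFinset) =
      ENNReal.ofReal (cutFraction (p.map w) (n.map w)) * volume (cornerSimplex ι t) := by
  match p, n with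
  | p, [] => simp [cutFraction, cutSimplex_empty_right fun i => (hw i).le]
  | [], j :: n =>
    simpa [cutFraction] using
      volume_cutSimplex_empty_left hw (List.mem_toFinset.mpr List.mem_cons_self)
  | i :: p, j :: n =>
    obtain ⟨hij, hip, hin, hjp, hjn⟩ : i ≠ j ∧ i ∉ p.toFinset ∧ i ∉ n.toFinset ∧
        j ∉ p.toFinset ∧ j ∉ n.toFinset := by
      simp only [List.mem_toFinset]
      grind
    have hdropN := volume_cutSimplex_toFinset (p := i :: p) (n := n) hw (hpn.sublist (by simp))
    have hdropP := volume_cutSimplex_toFinset (p := p) (n := j :: n) hw (hpn.sublist (by simp))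
    have hnonneg (l l' : List ι) : 0 ≤ cutFraction (l.map w) (l'.map w) :=
      cutFraction_nonneg (List.forall_mem_map.mpr fun k _ => (hw k).le)
        (List.forall_mem_map.mpr fun k _ => (hw k).le)
    have hcoeff (k : ι) : 0 ≤ w k / (w i + w j) :=
      div_nonneg (hw k).le (add_pos (hw i) (hw j)).le
    have hsplit := volume_cutSimplex_insert_insert (t := t) (hw i) (hw j) hij hip hin hjp hjn
    simp only [← List.toFinset_cons] at hsplit
    rw [hsplit, hdropN, hdropP, ← mul_assoc, ← mul_assoc, ← add_mul,
      ← ENNReal.ofReal_mul (hcoeff i), ← ENNReal.ofReal_mul (hcoeff j),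
      ← ENNReal.ofReal_add (mul_nonneg (hcoeff i) (hnonneg _ _))
        (mul_nonneg (hcoeff j) (hnonneg _ _))]
    simp only [List.map_cons, cutFraction]
termination_by p.length + n.length

end CutSimplex

/-- Barycentric coordinates on the simplex obtained from the part `a₂ + c₁ ≤ b₁ + b₂` of `E123` by
dropping `1 ≤ 2a₁ + 2a₂`. The coordinate left out, `1 - ∑ yₖ = 2 * (c₁ - a₁)`, belongs to the vertex
with `2a₁ + 2a₂ = 1`. -/
noncomputable def lowerCoords (x : Fin 6 → ℝ) : Fin 6 → ℝ :=
  ![2 * x 0,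
    8 / 3 * (x 1 - x 3),
    4 / 3 * (x 3 - x 2),
    8 / 3 * (x 2 + x 3 - (x 1 + x 4)),
    4 / 3 * (x 4 + x 5 - (x 2 + x 3)),
    1 - (2 * x 4 + 4 * x 5) / 3]

/-- Barycentric coordinates on the simplex obtained from the part `b₁ + b₂ ≤ a₂ + c₁` of `E123` by
dropping `1 ≤ 2a₁ + 2a₂`. The coordinate left out, `1 - ∑ yₖ = 2 * (b₁ + b₂ - (a₁ + a₂))`, belongs
to the vertex with `2a₁ + 2a₂ = 1`. -/
noncomputable def upperCoords (x : Fin 6 → ℝ) : Fin 6 → ℝ :=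
  ![2 * x 0,
    8 / 3 * (x 2 - x 4),
    4 / 3 * (x 3 - x 2),
    10 / 3 * (x 1 + x 4 - (x 2 + x 3)),
    4 / 3 * (x 5 - x 1),
    1 - (2 * x 4 + 4 * x 5) / 3]

theorem volume_preimage_lowerCoords (s : Set (Fin 6 → ℝ)) :
    volume (lowerCoords ⁻¹' s) = ENNReal.ofReal (81 / 4096) * volume s := by
  let M : Matrix (Fin 6) (Fin 6) ℝ :=
    !![2, 0, 0, 0, 0, 0;
      0, 8 / 3, 0, -8 / 3, 0, 0;
      0, 0, -4 / 3, 4 / 3, 0, 0;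
      0, -8 / 3, 8 / 3, 8 / 3, -8 / 3, 0;
      0, 0, -4 / 3, -4 / 3, 4 / 3, 4 / 3;
      0, 0, 0, 0, -2 / 3, -4 / 3]
  have hdet : M.det = -4096 / 81 := by
    simp [M, Matrix.det_succ_row_zero, Fin.sum_univ_succ, Fin.succAbove]
    norm_num
  have hcoords : lowerCoords = fun x => M.mulVec x + Pi.single 5 1 := by
    ext x k
    fin_cases k <;> simp [lowerCoords, M, dotProduct, Fin.sum_univ_succ] <;> ring
  rw [hcoords, volume_preimage_mulVec_add (by norm_num [hdet]), hdet]
  norm_num [abs_of_neg]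

theorem volume_preimage_upperCoords (s : Set (Fin 6 → ℝ)) :
    volume (upperCoords ⁻¹' s) = ENNReal.ofReal (81 / 5120) * volume s := by
  let M : Matrix (Fin 6) (Fin 6) ℝ :=
    !![2, 0, 0, 0, 0, 0;
      0, 0, 8 / 3, 0, -8 / 3, 0;
      0, 0, -4 / 3, 4 / 3, 0, 0;
      0, 10 / 3, -10 / 3, -10 / 3, 10 / 3, 0;
      0, -4 / 3, 0, 0, 0, 4 / 3;
      0, 0, 0, 0, -2 / 3, -4 / 3]
  have hdet : M.det = 5120 / 81 := by
    simp [M, Matrix.det_succ_row_zero, Fin.sum_univ_succ, Fin.succAbove]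
    norm_num
  have hcoords : upperCoords = fun x => M.mulVec x + Pi.single 5 1 := by
    ext x k
    fin_cases k <;> simp [upperCoords, M, dotProduct, Fin.sum_univ_succ] <;> ring
  rw [hcoords, volume_preimage_mulVec_add (by norm_num [hdet]), hdet]
  norm_num [abs_of_pos]

/-- The values of `|2a₁ + 2a₂ - 1|` at the vertices dual to `lowerCoords`. -/
noncomputable def lowerWeights : Fin 6 → ℝ := ![1, 1 / 2, 1 / 2, 1 / 4, 1, 1]

/-- The values of `|2a₁ + 2a₂ - 1|` at the vertices dual to `upperCoords`. -/
noncomputable def upperWeights : Fin 6 → ℝ := ![1, 1 / 2, 1 / 2, 1 / 5, 1, 1]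

theorem mem_E123_iff {x : Fin 6 → ℝ} :
    x ∈ E123 ↔ (0 ≤ x 0 ∧ x 0 ≤ x 4 ∧ x 4 ≤ x 2 ∧ x 2 ≤ x 3 ∧ x 3 ≤ x 1 ∧ x 1 ≤ x 5) ∧
      x 0 + x 1 ≤ x 2 + x 3 ∧ x 2 + x 3 ≤ x 4 + x 5 ∧ 2 * x 4 + 4 * x 5 ≤ 3 ∧
        1 ≤ 2 * x 0 + 2 * x 1 := by
  simp only [E123, Set.mem_ofPred_eq]
  grind

theorem E123_inter_eq_preimage_lowerCoords :
    E123 ∩ {x | x 1 + x 4 ≤ x 2 + x 3} =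
      lowerCoords ⁻¹' cutSimplex 1 lowerWeights [0, 1, 2].toFinset [3, 4, 5].toFinset := by
  ext x
  have hnonneg : (∀ k, 0 ≤ lowerCoords x k) ↔ 0 ≤ x 0 ∧ x 3 ≤ x 1 ∧ x 2 ≤ x 3 ∧
      x 1 + x 4 ≤ x 2 + x 3 ∧ x 2 + x 3 ≤ x 4 + x 5 ∧ 2 * x 4 + 4 * x 5 ≤ 3 := by
    simp [lowerCoords, Fin.forall_fin_succ, div_le_one]
  have hsum : ∑ k, lowerCoords x k ≤ 1 ↔ x 0 ≤ x 4 := by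
    have hleftOut : ∑ k, lowerCoords x k = 1 - 2 * (x 4 - x 0) := by
      simp only [Fin.sum_univ_six, lowerCoords, Matrix.cons_val]
      ring
    grind
  have hcut : ∑ j ∈ [3, 4, 5].toFinset, lowerWeights j * lowerCoords x j ≤
      ∑ i ∈ [0, 1, 2].toFinset, lowerWeights i * lowerCoords x i ↔ 1 ≤ 2 * x 0 + 2 * x 1 := by
    rw [List.sum_toFinset _ (by decide), List.sum_toFinset _ (by decide)]
    simp only [List.map, List.sum_cons, List.sum_nil, lowerCoords, lowerWeights, Matrix.cons_val]
    grind
  simp only [cutSimplex, cornerSimplex, Set.mem_inter_iff, Set.mem_preimage, Set.mem_ofPred_eq,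
    hnonneg, hsum, hcut, mem_E123_iff]
  grind

theorem E123_inter_eq_preimage_upperCoords :
    E123 ∩ {x | x 2 + x 3 ≤ x 1 + x 4} =
      upperCoords ⁻¹' cutSimplex 1 upperWeights [0, 1, 2, 3].toFinset [4, 5].toFinset := by
  ext x
  have hnonneg : (∀ k, 0 ≤ upperCoords x k) ↔ 0 ≤ x 0 ∧ x 4 ≤ x 2 ∧ x 2 ≤ x 3 ∧
      x 2 + x 3 ≤ x 1 + x 4 ∧ x 1 ≤ x 5 ∧ 2 * x 4 + 4 * x 5 ≤ 3 := by
    simp [upperCoords, Fin.forall_fin_succ, div_le_one]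
  have hsum : ∑ k, upperCoords x k ≤ 1 ↔ x 0 + x 1 ≤ x 2 + x 3 := by
    have hleftOut : ∑ k, upperCoords x k = 1 - 2 * (x 2 + x 3 - (x 0 + x 1)) := by
      simp only [Fin.sum_univ_six, upperCoords, Matrix.cons_val]
      ring
    grind
  have hcut : ∑ j ∈ [4, 5].toFinset, upperWeights j * upperCoords x j ≤
      ∑ i ∈ [0, 1, 2, 3].toFinset, upperWeights i * upperCoords x i ↔ 1 ≤ 2 * x 0 + 2 * x 1 := by
    rw [List.sum_toFinset _ (by decide), List.sum_toFinset _ (by decide)]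
    simp only [List.map, List.sum_cons, List.sum_nil, upperCoords, upperWeights, Matrix.cons_val]
    grind
  simp only [cutSimplex, cornerSimplex, Set.mem_inter_iff, Set.mem_preimage, Set.mem_ofPred_eq,
    hnonneg, hsum, hcut, mem_E123_iff]
  grind

theorem volume_E123_inter_lower :
    volume (E123 ∩ {x | x 1 + x 4 ≤ x 2 + x 3}) = ENNReal.ofReal (23 / 1843200) := by
  have hpos : ∀ i, 0 < lowerWeights i := by norm_num [lowerWeights, Fin.forall_fin_succ]
  have hfraction : cutFraction ([0, 1, 2].map lowerWeights) ([3, 4, 5].map lowerWeights) =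
      184 / 405 := by
    change cutFraction [1, 1 / 2, 1 / 2] [1 / 4, 1, 1] = _
    norm_num [cutFraction]
  rw [E123_inter_eq_preimage_lowerCoords, volume_preimage_lowerCoords,
    volume_cutSimplex_toFinset hpos (by decide), hfraction,
    volume_cornerSimplex_fin 6 zero_le_one, ← ENNReal.ofReal_mul (by norm_num),
    ← ENNReal.ofReal_mul (by norm_num)]
  norm_num [Nat.factorial]

theorem volume_E123_inter_upper :
    volume (E123 ∩ {x | x 2 + x 3 ≤ x 1 + x 4}) = ENNReal.ofReal (23 / 1843200) := by
  have hpos : ∀ i, 0 < upperWeights i := by norm_num [upperWeights, Fin.forall_fin_succ]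
  have hfraction : cutFraction ([0, 1, 2, 3].map upperWeights) ([4, 5].map upperWeights) =
      46 / 81 := by
    change cutFraction [1, 1 / 2, 1 / 2, 1 / 5] [1, 1] = _
    norm_num [cutFraction]
  rw [E123_inter_eq_preimage_upperCoords, volume_preimage_upperCoords,
    volume_cutSimplex_toFinset hpos (by decide), hfraction,
    volume_cornerSimplex_fin 6 zero_le_one, ← ENNReal.ofReal_mul (by norm_num),
    ← ENNReal.ofReal_mul (by norm_num)]
  norm_num [Nat.factorial]

theorem volume_E123 : volume E123 = 23 / 921600 := by
  let coord (i : Fin 6) : (Fin 6 → ℝ) →ₗ[ℝ] ℝ := LinearMap.proj i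
  have hne : coord 1 + coord 4 ≠ coord 2 + coord 3 := fun h => by
    simpa [coord] using LinearMap.congr_fun h (Pi.single 1 1)
  calc volume E123
    _ = volume (E123 ∩ {x | x 1 + x 4 ≤ x 2 + x 3}) +
          volume (E123 ∩ {x | x 2 + x 3 ≤ x 1 + x 4}) :=
      addHaar_eq_add_inter_linearMap_le volume hne E123
    _ = ENNReal.ofReal (23 / 1843200) + ENNReal.ofReal (23 / 1843200) := by
      rw [volume_E123_inter_lower, volume_E123_inter_upper]
    _ = ENNReal.ofReal (23 / 921600) := by
      rw [← ENNReal.ofReal_add (by norm_num) (by norm_num)]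
      norm_num
    _ = 23 / 921600 := by
      rw [ENNReal.ofReal_div_of_pos (by norm_num)]
      norm_num
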